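/- Let D_X > 0 and suppose some channel k* ∈ ℛ_X(D_X;X) attains the minimal induced task distortion D_T^min = min 𝒟*_T(D_X;X). Then the minimal achievable rate of the supervised approach is upper-bounded by the input rate-distortion function: R_X(D_T^min;T) ≤ R_X(D_X;X). -/

import Mathlib

open scoped BigOperators

/-- Joint distribution P(a,b) = p(a)·k(a)(b) induced by a source `p` and a channel `k`,
as a real number. -/
noncomputable def jointP {A B : Type*} [Fintype A] [Fintype B] (p : PMF A) (k : A → PMF B)
    (a : A) (b : B) : ℝ :=
  (p a * k a b).toReal

/-- Marginal distribution of the second coordinate of the joint induced by `(p, k)`. -/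
noncomputable def margSnd {A B : Type*} [Fintype A] [Fintype B] (p : PMF A) (k : A → PMF B)
    (b : B) : ℝ :=
  ∑ a, jointP p k a b

/-- Mutual information I(A;B) = ∑_{a,b} P(a,b)·log(P(a,b)/(P(a)·P(b))) of the joint
induced by `(p, k)`; the convention 0·log 0 = 0 holds automatically in Lean. -/
noncomputable def mutualInfo {A B : Type*} [Fintype A] [Fintype B] (p : PMF A)
    (k : A → PMF B) : ℝ :=
  ∑ a, ∑ b, jointP p k a b * Real.log (jointP p k a b / ((p a).toReal * margSnd p k b))

/-- Expected distortion E[d(A,B)] under the joint induced by `(p, k)`. -/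
noncomputable def expDist {A B : Type*} [Fintype A] [Fintype B] (p : PMF A) (k : A → PMF B)
    (d : A → B → ℝ) : ℝ :=
  ∑ a, ∑ b, jointP p k a b * d a b

/-- Rate-distortion function: infimum of mutual information over all channels `A → PMF B`
meeting the expected-distortion constraint `≤ D`. -/
noncomputable def rate {A B : Type*} [Fintype A] [Fintype B] (p : PMF A) (d : A → B → ℝ)
    (D : ℝ) : ℝ :=
  sInf { r : ℝ | ∃ k : A → PMF B, expDist p k d ≤ D ∧ r = mutualInfo p k }

/-- Conditional probability P(A = a | B = b) under the joint induced by `(p, k)`. -/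
noncomputable def condProb {A B : Type*} [Fintype A] [Fintype B] (p : PMF A) (k : A → PMF B)
    (a : A) (b : B) : ℝ :=
  jointP p k a b / margSnd p k b

theorem jointP_nonneg {A B : Type*} [Fintype A] [Fintype B] (p : PMF A) (k : A → PMF B)
    (a : A) (b : B) : 0 ≤ jointP p k a b :=
  ENNReal.toReal_nonneg

theorem margSnd_nonneg {A B : Type*} [Fintype A] [Fintype B] (p : PMF A) (k : A → PMF B)
    (b : B) : 0 ≤ margSnd p k b :=
  Finset.sum_nonneg fun a _ => jointP_nonneg p k a b

theorem jointP_le_margSnd {A B : Type*} [Fintype A] [Fintype B] (p : PMF A) (k : A → PMF B)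
    (a : A) (b : B) : jointP p k a b ≤ margSnd p k b :=
  Finset.single_le_sum (f := fun a => jointP p k a b)
    (fun a _ => jointP_nonneg p k a b) (Finset.mem_univ a)

theorem PMF.sum_toReal_eq_one {A : Type*} [Fintype A] (p : PMF A) : ∑ a, (p a).toReal = 1 := by
  rw [← ENNReal.toReal_sum fun a _ => p.apply_ne_top a, ← tsum_fintype (L := .unconditional A),
    p.tsum_coe, ENNReal.toReal_one]

/-- The pointwise inequality behind nonnegativity of relative entropy. -/
theorem sub_le_mul_log_div {x y : ℝ} (hx : 0 ≤ x) (hy : 0 ≤ y) (hxy : y = 0 → x = 0) :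
    x - y ≤ x * Real.log (x / y) := by
  rcases hx.eq_or_lt with rfl | hx
  · simpa using hy
  · have hy : 0 < y := lt_of_le_of_ne hy fun h => hx.ne' (hxy h.symm)
    calc x - y = x * (1 - (x / y)⁻¹) := by field_simp
      _ ≤ x * Real.log (x / y) :=
        mul_le_mul_of_nonneg_left (Real.one_sub_inv_le_log_of_pos (div_pos hx hy)) hx.le

theorem mutualInfo_nonneg {A B : Type*} [Fintype A] [Fintype B] (p : PMF A) (k : A → PMF B) :
    0 ≤ mutualInfo p k := by
  have hsum : ∑ a, ∑ b, (jointP p k a b - (p a).toReal * margSnd p k b) = 0 := by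
    simp only [Finset.sum_sub_distrib, ← Finset.mul_sum, ← Finset.sum_mul,
      p.sum_toReal_eq_one, one_mul, margSnd]
    rw [Finset.sum_comm, sub_self]
  rw [← hsum]
  refine Finset.sum_le_sum fun a _ => Finset.sum_le_sum fun b _ =>
    sub_le_mul_log_div (jointP_nonneg p k a b)
      (mul_nonneg ENNReal.toReal_nonneg (margSnd_nonneg p k b)) fun h => ?_
  rcases mul_eq_zero.mp h with h | h
  · simp [jointP, ENNReal.toReal_mul, h]
  · exact le_antisymm (h ▸ jointP_le_margSnd p k a b) (jointP_nonneg p k a b)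

/-- Every channel meeting the distortion constraint bounds the rate-distortion function. -/
theorem rate_le_mutualInfo {A B : Type*} [Fintype A] [Fintype B] (p : PMF A) (d : A → B → ℝ)
    {D : ℝ} {k : A → PMF B} (hk : expDist p k d ≤ D) : rate p d D ≤ mutualInfo p k := by
  refine csInf_le ⟨0, ?_⟩ ⟨k, hk, rfl⟩
  rintro _ ⟨k', -, rfl⟩
  exact mutualInfo_nonneg p k'

/-- If some X-optimal channel k* (distortion ≤ D_X at rate R_X(D_X;X))
attains the minimal induced task distortion D_T^min = min 𝒟*_T(D_X;X), then
R_X(D_T^min;T) ≤ R_X(D_X;X). Here f = h ∘ g. -/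
theorem supervised_le_input_rd
    {𝒳 𝒴 𝒯 : Type*} [Fintype 𝒳] [Fintype 𝒴] [Fintype 𝒯]
    [Nonempty 𝒳] [Nonempty 𝒴] [Nonempty 𝒯]
    (pX : PMF 𝒳) (g : 𝒳 → 𝒴) (h : 𝒴 → 𝒯)
    (dT : 𝒯 → 𝒯 → ℝ) (hdT : ∀ t t', 0 ≤ dT t t')
    (dX : 𝒳 → 𝒳 → ℝ) (hdX : ∀ x x', 0 ≤ dX x x')
    (DX : ℝ) (hDX : 0 < DX)
    (kstar : 𝒳 → PMF 𝒳)
    (hk_dist : expDist pX kstar dX ≤ DX)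
    (hk_rate : mutualInfo pX kstar = rate pX dX DX)
    (DTmin : ℝ)
    (hattain : DTmin = expDist pX kstar (fun x xhat => dT (h (g x)) (h (g xhat))))
    (hmin : ∀ k : 𝒳 → PMF 𝒳, expDist pX k dX ≤ DX →
      mutualInfo pX k = rate pX dX DX →
      DTmin ≤ expDist pX k (fun x xhat => dT (h (g x)) (h (g xhat)))) :
    rate pX (fun x xhat => dT (h (g x)) (h (g xhat))) DTmin ≤ rate pX dX DX := by
  exact hk_rate ▸ rate_le_mutualInfo pX _ hattain.ge
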